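/- Let α > 1 and M > 0. Define g_{α,M}(t) = t (min{t,M})^{α−1} for t ≥ 0, let h(τ) = √α · τ^{(α−1)/2} for 0 ≤ τ ≤ M and h(τ) = M^{(α−1)/2} for τ > M, and set G_{α,M}(t) = ∫_0^t h(τ) dτ. Then for all a, b ≥ 0, |G_{α,M}(a) − G_{α,M}(b)|² ≤ (g_{α,M}(a) − g_{α,M}(b))(a − b). -/

import Mathlib

open MeasureTheory Filter Topology Bornology

noncomputable section

abbrev RD (N : ℕ) := EuclideanSpace ℝ (Fin N)

/-- The region `ℝ^{2N} ∖ (Ωᶜ × Ωᶜ)` of integration for the fractional Neumann form. -/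
def crossSet {N : ℕ} (Ω : Set (RD N)) : Set (RD N × RD N) := {p | p.1 ∈ Ω ∨ p.2 ∈ Ω}

/-- The bilinear form `⟨u,v⟩_{ε,s}`. -/
def fracPairing (N : ℕ) (CNs ε s : ℝ) (Ω : Set (RD N)) (u v : RD N → ℝ) : ℝ :=
  CNs * ε ^ (2 * s) / 2 *
      ∫ p in crossSet Ω, (u p.1 - u p.2) * (v p.1 - v p.2) / ‖p.1 - p.2‖ ^ ((N : ℝ) + 2 * s)
    + ∫ x in Ω, u x * v x

/-- Membership in the space `H^s_ε(Ω)`: measurability together with finiteness of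
`⟨u,u⟩_{ε,s}` (expressed as integrability of the nonnegative integrands). -/
def memHs (N : ℕ) (CNs ε s : ℝ) (Ω : Set (RD N)) (u : RD N → ℝ) : Prop :=
  Measurable u ∧
    IntegrableOn (fun p : RD N × RD N =>
      (u p.1 - u p.2) ^ 2 / ‖p.1 - p.2‖ ^ ((N : ℝ) + 2 * s)) (crossSet Ω) volume ∧
    IntegrableOn (fun x => (u x) ^ 2) Ω volume

/-- `F(t) = ∫_0^t f(τ) dτ`. -/
def primF (f : ℝ → ℝ) (t : ℝ) : ℝ := ∫ τ in (0:ℝ)..t, f τ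

/-- The energy functional `I_ε`. -/
def energy (N : ℕ) (CNs ε s : ℝ) (Ω : Set (RD N)) (f : ℝ → ℝ) (u : RD N → ℝ) : ℝ :=
  (1 / 2) * fracPairing N CNs ε s Ω u u - ∫ x in Ω, primF f (u x)

/-- Weak solution of the fractional Neumann problem. -/
def isWeakSolution (N : ℕ) (CNs ε s : ℝ) (Ω : Set (RD N)) (f : ℝ → ℝ) (u : RD N → ℝ) : Prop :=
  memHs N CNs ε s Ω u ∧
    ∀ v : RD N → ℝ, memHs N CNs ε s Ω v →
      fracPairing N CNs ε s Ω u v = ∫ x in Ω, f (u x) * v x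

def cond_f1 (f : ℝ → ℝ) : Prop := (∀ t < (0:ℝ), f t = 0) ∧ ∀ t > (0:ℝ), 0 < f t

def cond_f2 (f : ℝ → ℝ) (p : ℝ) : Prop :=
  Tendsto (fun t => f t / t) (𝓝[>] (0:ℝ)) (𝓝 0) ∧
    Tendsto (fun t => f t / t ^ (p - 1)) atTop (𝓝 0)

def cond_f3 (f : ℝ → ℝ) : Prop := Tendsto (fun t => f t / t) atTop atTop

def cond_f4 (f : ℝ → ℝ) : Prop :=
  ∃ θ > (2:ℝ), ∃ a₃ ≥ (0:ℝ), ∀ t ≥ a₃, 0 < θ * primF f t ∧ θ * primF f t ≤ t * f t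

def cond_f5 (f : ℝ → ℝ) : Prop :=
  ∃ α > (0:ℝ), ∀ t > (0:ℝ), f t = t → α ≤ t ^ 2 / 2 - primF f t

/-- The test function `φ_ε`. -/
def phiTest (N : ℕ) (ε : ℝ) (x : RD N) : ℝ :=
  if ‖x‖ ≤ ε then (ε ^ N)⁻¹ * (1 - ‖x‖ / ε) else 0

/-!
Let `γ = √g'`, so that `G` is a primitive of `γ` and `g` a primitive of `γ²`. By the Cauchy–Schwarz
inequality, `(G a - G b)² = (∫_b^a γ)² ≤ (a - b) ∫_b^a γ² = (a - b) (g a - g b)`. Swapping the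
endpoints changes the sign of both factors on the right, so `a` and `b` need not be ordered.
-/

section CauchySchwarz

theorem sq_integral_le_measureReal_univ_mul_integral_sq {Ω : Type*} [MeasurableSpace Ω]
    {μ : Measure Ω} [IsFiniteMeasure μ] {f : Ω → ℝ} (hf : MemLp f 2 μ) :
    (∫ x, f x ∂μ) ^ 2 ≤ μ.real Set.univ * ∫ x, f x ^ 2 ∂μ := by
  rcases eq_zero_or_neZero μ with rfl | _
  · simp
  have jensen : (⨍ x, f x ∂μ) ^ 2 ≤ ⨍ x, f x ^ 2 ∂μ :=
    even_two.convexOn_pow.map_average_le (continuous_pow 2).continuousOn isClosed_univ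
      (by simp) (hf.integrable one_le_two) hf.integrable_sq
  have hμ : 0 < μ.real Set.univ := measureReal_univ_pos
  simp only [average_eq, smul_eq_mul] at jensen
  field_simp at jensen
  exact jensen

theorem sq_intervalIntegral_le_sub_mul_intervalIntegral_sq {f : ℝ → ℝ} {a b : ℝ}
    (hf : MemLp f 2 (volume.restrict (Set.uIoc a b))) :
    (∫ τ in a..b, f τ) ^ 2 ≤ (b - a) * ∫ τ in a..b, f τ ^ 2 := by
  wlog hab : a ≤ b generalizing a b
  · have swapped := this (Set.uIoc_comm a b ▸ hf) (le_of_not_ge hab)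
    rw [intervalIntegral.integral_symm a b, intervalIntegral.integral_symm a b] at swapped
    linarith
  rw [Set.uIoc_of_le hab] at hf
  simpa [intervalIntegral.integral_of_le hab, hab] using
    sq_integral_le_measureReal_univ_mul_integral_sq hf

end CauchySchwarz

section Ite

variable {E : Type*} [NormedAddCommGroup E] {f g : ℝ → E} {a b c : ℝ} {μ : Measure ℝ}

theorem intervalIntegrable_ite_le (hf : IntervalIntegrable f μ a b)
    (hg : IntervalIntegrable g μ a b) :
    IntervalIntegrable (fun τ => if τ ≤ c then f τ else g τ) μ a b := by
  rw [intervalIntegrable_iff] at *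
  exact Integrable.piecewise (s := Set.Iic c) measurableSet_Iic hf.integrableOn hg.integrableOn

theorem intervalIntegral_ite_le [NormedSpace ℝ E] (hac : a ≤ c) (hab : a ≤ b)
    (hf : IntervalIntegrable f μ a b) (hg : IntervalIntegrable g μ a b) :
    ∫ τ in a..b, (if τ ≤ c then f τ else g τ) ∂μ =
      (∫ τ in a..min b c, f τ ∂μ) + ∫ τ in min b c..b, g τ ∂μ := by
  have ham : a ≤ min b c := le_min hab hac
  have hmb : min b c ≤ b := min_le_left b c
  have hint := intervalIntegrable_ite_le (c := c) hf hg
  have hm : min b c ∈ Set.uIcc a b := Set.mem_uIcc_of_le ham hmb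
  rw [← intervalIntegral.integral_add_adjacent_intervals
    (hint.mono_set (Set.uIcc_subset_uIcc_left hm)) (hint.mono_set (Set.uIcc_subset_uIcc_right hm))]
  congr 1
  · refine intervalIntegral.integral_congr_ae (.of_forall fun τ hτ => ?_)
    rw [Set.uIoc_of_le ham] at hτ
    exact if_pos (hτ.2.trans (min_le_right b c))
  · refine intervalIntegral.integral_congr_ae (.of_forall fun τ hτ => ?_)
    rw [Set.uIoc_of_le hmb] at hτ
    exact if_neg fun hτc => hτ.1.not_ge (le_min hτ.2 hτc)

end Ite

/-- The truncated power `g_{α,M}`, which agrees with `t ^ α` up to `M` and is linear afterwards. -/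
def truncPow (α M t : ℝ) : ℝ := t * min t M ^ (α - 1)

/-- The square root of the derivative of `truncPow α M` on `[0, ∞)`, that is, the integrand of
`G_{α,M}`. At the kink `τ = M` it takes its left limit. -/
def sqrtDerivTruncPow (α M τ : ℝ) : ℝ :=
  if τ ≤ M then √α * τ ^ ((α - 1) / 2) else M ^ ((α - 1) / 2)

section TruncPow

variable {α M a b t τ : ℝ}

theorem measurable_sqrtDerivTruncPow : Measurable (sqrtDerivTruncPow α M) :=
  Measurable.ite measurableSet_Iic (by fun_prop) measurable_const

theorem sqrtDerivTruncPow_sq (hα : 0 ≤ α) (hM : 0 ≤ M) (hτ : 0 ≤ τ) :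
    sqrtDerivTruncPow α M τ ^ 2 = if τ ≤ M then α * τ ^ (α - 1) else M ^ (α - 1) := by
  have rpow_half_sq {x : ℝ} (hx : 0 ≤ x) : (x ^ ((α - 1) / 2)) ^ 2 = x ^ (α - 1) := by
    rw [← Real.rpow_mul_natCast hx, Nat.cast_ofNat, div_mul_cancel₀ _ two_ne_zero]
  unfold sqrtDerivTruncPow
  split_ifs
  · rw [mul_pow, Real.sq_sqrt hα, rpow_half_sq hτ]
  · exact rpow_half_sq hM

theorem intervalIntegrable_const_mul_rpow_sub_one (hα : 0 < α) :
    IntervalIntegrable (fun τ => α * τ ^ (α - 1)) volume a b :=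
  (intervalIntegral.intervalIntegrable_rpow' (by linarith)).const_mul α

theorem intervalIntegrable_sqrtDerivTruncPow_sq (hα : 0 < α) (hM : 0 ≤ M) (ha : 0 ≤ a)
    (hb : 0 ≤ b) : IntervalIntegrable (fun τ => sqrtDerivTruncPow α M τ ^ 2) volume a b := by
  have hite := intervalIntegrable_ite_le (c := M)
    (intervalIntegrable_const_mul_rpow_sub_one (a := a) (b := b) hα)
    (intervalIntegrable_const (c := M ^ (α - 1)))
  exact hite.congr fun τ hτ =>
    (sqrtDerivTruncPow_sq hα.le hM ((le_min ha hb).trans hτ.1.le)).symm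

theorem memLp_two_sqrtDerivTruncPow (hα : 0 < α) (hM : 0 ≤ M) (ha : 0 ≤ a) (hb : 0 ≤ b) :
    MemLp (sqrtDerivTruncPow α M) 2 (volume.restrict (Set.uIoc a b)) :=
  (memLp_two_iff_integrable_sq measurable_sqrtDerivTruncPow.aestronglyMeasurable).2
    (intervalIntegrable_sqrtDerivTruncPow_sq hα hM ha hb).def'

theorem intervalIntegrable_sqrtDerivTruncPow (hα : 0 < α) (hM : 0 ≤ M) (ha : 0 ≤ a)
    (hb : 0 ≤ b) : IntervalIntegrable (sqrtDerivTruncPow α M) volume a b :=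
  have : IsFiniteMeasure (volume.restrict (Set.uIoc a b)) := Real.isFiniteMeasure_restrict_Ioc _ _
  intervalIntegrable_iff.2 ((memLp_two_sqrtDerivTruncPow hα hM ha hb).integrable one_le_two)

theorem integral_sqrtDerivTruncPow_sq (hα : 0 < α) (hM : 0 ≤ M) (ht : 0 ≤ t) :
    ∫ τ in 0..t, sqrtDerivTruncPow α M τ ^ 2 = truncPow α M t := by
  have hm : 0 ≤ min t M := le_min ht hM
  calc ∫ τ in 0..t, sqrtDerivTruncPow α M τ ^ 2
      = ∫ τ in 0..t, if τ ≤ M then α * τ ^ (α - 1) else M ^ (α - 1) := by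
        refine intervalIntegral.integral_congr fun τ hτ => ?_
        rw [Set.uIcc_of_le ht] at hτ
        exact sqrtDerivTruncPow_sq hα.le hM hτ.1
    _ = (∫ τ in 0..min t M, α * τ ^ (α - 1)) + ∫ _ in min t M..t, M ^ (α - 1) :=
        intervalIntegral_ite_le hM ht (intervalIntegrable_const_mul_rpow_sub_one hα)
          intervalIntegrable_const
    _ = min t M ^ α + (t - min t M) * M ^ (α - 1) := by
        rw [intervalIntegral.integral_const_mul, integral_rpow (.inl (by linarith)),
          sub_add_cancel, Real.zero_rpow hα.ne', sub_zero, mul_div_cancel₀ _ hα.ne',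
          intervalIntegral.integral_const, smul_eq_mul]
    _ = min t M * min t M ^ (α - 1) + (t - min t M) * M ^ (α - 1) := by
        rw [← Real.rpow_one_add' hm (by linarith), add_sub_cancel]
    _ = truncPow α M t := by
        unfold truncPow
        rcases le_total t M with h | h
        · simp only [min_eq_left h, sub_self, zero_mul, add_zero]
        · rw [min_eq_right h]
          ring

end TruncPow

theorem statement11_general (α M : ℝ) (hα : 0 < α) (hM : 0 < M) (a b : ℝ) (ha : 0 ≤ a)
    (hb : 0 ≤ b) :
    |(∫ τ in 0..a, sqrtDerivTruncPow α M τ) - ∫ τ in 0..b, sqrtDerivTruncPow α M τ| ^ 2 ≤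
      (truncPow α M a - truncPow α M b) * (a - b) := by
  have hγ {t : ℝ} (ht : 0 ≤ t) := intervalIntegrable_sqrtDerivTruncPow hα hM.le le_rfl ht
  have hγ_sq {t : ℝ} (ht : 0 ≤ t) := intervalIntegrable_sqrtDerivTruncPow_sq hα hM.le le_rfl ht
  calc |(∫ τ in 0..a, sqrtDerivTruncPow α M τ) - ∫ τ in 0..b, sqrtDerivTruncPow α M τ| ^ 2
      = (∫ τ in b..a, sqrtDerivTruncPow α M τ) ^ 2 := by
        rw [sq_abs, intervalIntegral.integral_interval_sub_left (hγ ha) (hγ hb)]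
    _ ≤ (a - b) * ∫ τ in b..a, sqrtDerivTruncPow α M τ ^ 2 :=
        sq_intervalIntegral_le_sub_mul_intervalIntegral_sq
          (memLp_two_sqrtDerivTruncPow hα hM.le hb ha)
    _ = (truncPow α M a - truncPow α M b) * (a - b) := by
        rw [← intervalIntegral.integral_interval_sub_left (hγ_sq ha) (hγ_sq hb),
          integral_sqrtDerivTruncPow_sq hα hM.le ha,
          integral_sqrtDerivTruncPow_sq hα hM.le hb, mul_comm]

/-- `|G_{α,M}(a) - G_{α,M}(b)|² ≤ (g_{α,M}(a) - g_{α,M}(b))(a - b)`. -/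
theorem statement11 (α M : ℝ) (hα : 1 < α) (hM : 0 < M) :
    ∀ a b : ℝ, 0 ≤ a → 0 ≤ b →
      |(∫ τ in (0:ℝ)..a,
            (if τ ≤ M then Real.sqrt α * τ ^ ((α - 1) / 2) else M ^ ((α - 1) / 2))) -
          ∫ τ in (0:ℝ)..b,
            (if τ ≤ M then Real.sqrt α * τ ^ ((α - 1) / 2) else M ^ ((α - 1) / 2))| ^ 2 ≤
        (a * (min a M) ^ (α - 1) - b * (min b M) ^ (α - 1)) * (a - b) :=
  statement11_general α M (by linarith) hM

end
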